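/- arXiv:1907.01114 — 3 statements merged into one kernel-verified Lean document; each statement's English description precedes it below -/
import Mathlib

section
/- Let R be a commutative ring, v an additive valuation on R with values in ℝ≥0∞, and 𝔞_• = (𝔞_k)_{k≥1} a graded sequence of nonzero ideals with v(𝔞_•) := inf_{k≥1} v(𝔞_k)/k = 1. Let 𝔞^v_k := {f ∈ R : v(f) ≥ k} be the valuation ideals of v. Then: (i) 𝔞_k ⊆ 𝔞^v_k for every k ≥ 1; (ii) v(𝔞^v_•) := inf_{k≥1} v(𝔞^v_k)/k = 1; and (iii) for every additive valuation w on R with values in ℝ≥0∞ one has w(𝔞^v_•) ≤ w(𝔞_•), where w(𝔟_•) := inf_{k≥1} w(𝔟_k)/k. -/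
open Filter Topology ENNReal

/-- The value of an additive `ℝ≥0∞`-valued valuation on an ideal:
`v(𝔞) := inf { v f : f ∈ 𝔞 }`. -/
noncomputable def idealVal {R : Type*} [CommRing R] (v : AddValuation R ℝ≥0∞)
    (I : Ideal R) : ℝ≥0∞ :=
  ⨅ (f : R) (_ : f ∈ I), v f

/-- The `k`-th valuation ideal `𝔞^v_k = { f ∈ R : v(f) ≥ k }` of an additive
`ℝ≥0∞`-valued valuation `v`. -/
def valIdeal {R : Type*} [CommRing R] (v : AddValuation R ℝ≥0∞) (k : ℕ) : Ideal R where
  carrier := {f : R | (k : ℝ≥0∞) ≤ v f}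
  zero_mem' := by simp [v.map_zero]
  add_mem' := fun hf hg => le_trans (le_min hf hg) (v.map_add _ _)
  smul_mem' := fun c f hf => by
    have hf' : (k : ℝ≥0∞) ≤ v f := hf
    simp only [smul_eq_mul, Set.mem_setOf_eq, v.map_mul]
    exact le_trans hf' (le_add_self)

/-- A larger ideal has a smaller value. -/
theorem idealVal_anti {R : Type*} [CommRing R] (v : AddValuation R ℝ≥0∞) {I J : Ideal R}
    (h : I ≤ J) : idealVal v J ≤ idealVal v I :=
  le_iInf₂ fun f hf => iInf₂_le f (h hf)

theorem le_idealVal_valIdeal {R : Type*} [CommRing R] (v : AddValuation R ℝ≥0∞) (k : ℕ) :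
    (k : ℝ≥0∞) ≤ idealVal v (valIdeal v k) :=
  le_iInf₂ fun _ hf => hf

theorem le_idealVal_of_one_le_iInf {R : Type*} [CommRing R] (v : AddValuation R ℝ≥0∞)
    (a : ℕ → Ideal R)
    (h : 1 ≤ ⨅ (k : ℕ) (_ : 1 ≤ k), idealVal v (a k) / (k : ℝ≥0∞)) {k : ℕ} (hk : 1 ≤ k) :
    (k : ℝ≥0∞) ≤ idealVal v (a k) := by
  simpa using ENNReal.mul_le_of_le_div (h.trans (iInf₂_le k hk))

/-- Let `v` be an additive `ℝ≥0∞`-valued valuation on a commutative ring `R` and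
`𝔞_•` a graded sequence of nonzero ideals with `v(𝔞_•) := inf_{k≥1} v(𝔞_k)/k = 1`.
Then: (i) `𝔞_k ⊆ 𝔞^v_k` for all `k ≥ 1`; (ii) `v(𝔞^v_•) = 1`; and (iii) for every
additive `ℝ≥0∞`-valued valuation `w` one has `w(𝔞^v_•) ≤ w(𝔞_•)`. -/
theorem valIdeal_of_graded_sequence_computes
    {R : Type*} [CommRing R] (v : AddValuation R ℝ≥0∞) (a : ℕ → Ideal R)
    (hnz : ∀ k, 1 ≤ k → a k ≠ ⊥)
    (hgraded : ∀ k l, 1 ≤ k → 1 ≤ l → a k * a l ≤ a (k + l))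
    (hone : (⨅ (k : ℕ) (_ : 1 ≤ k), idealVal v (a k) / (k : ℝ≥0∞)) = 1) :
    (∀ k : ℕ, 1 ≤ k → a k ≤ valIdeal v k) ∧
    ((⨅ (k : ℕ) (_ : 1 ≤ k), idealVal v (valIdeal v k) / (k : ℝ≥0∞)) = 1) ∧
    (∀ w : AddValuation R ℝ≥0∞,
      (⨅ (k : ℕ) (_ : 1 ≤ k), idealVal w (valIdeal v k) / (k : ℝ≥0∞)) ≤
      (⨅ (k : ℕ) (_ : 1 ≤ k), idealVal w (a k) / (k : ℝ≥0∞))) := by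
  have hle : ∀ k : ℕ, 1 ≤ k → a k ≤ valIdeal v k := fun k hk f hf =>
    (le_idealVal_of_one_le_iInf v a hone.ge hk).trans (iInf₂_le f hf)
  have hmono : ∀ w : AddValuation R ℝ≥0∞,
      (⨅ (k : ℕ) (_ : 1 ≤ k), idealVal w (valIdeal v k) / (k : ℝ≥0∞)) ≤
      (⨅ (k : ℕ) (_ : 1 ≤ k), idealVal w (a k) / (k : ℝ≥0∞)) := fun w =>
    iInf₂_mono fun k hk => ENNReal.div_le_div_right (idealVal_anti w (hle k hk)) _
  refine ⟨hle, le_antisymm ((hmono v).trans hone.le) (le_iInf₂ fun k hk => ?_), hmono⟩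
  rw [ENNReal.le_div_iff_mul_le (Or.inl (by simp; omega)) (Or.inl (ENNReal.natCast_ne_top k)),
    one_mul]
  exact le_idealVal_valIdeal v k
end

section
/- Let R be a commutative ring, w an additive valuation on R with values in ℝ≥0∞, and c > 0 a real number. Let (v_j)_{j≥1} be a sequence of additive valuations on R with values in ℝ≥0∞ such that for every integer j ≥ 1 and every g ∈ R with w(g) ≥ j one has v_j(g) ≥ j/c. Then for every f ∈ R, liminf_{j→∞} v_j(f) ≥ w(f)/c. -/
open Filter Topology ENNReal

open scoped NNReal

/-- If `a < b`, then for all large `j` the interval `[j / b, j / a]` contains a positive integer. -/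
lemma eventually_exists_nat_mul_le_le_mul {a b : ℝ} (ha : 0 ≤ a) (hab : a < b) :
    ∀ᶠ j : ℕ in atTop, ∃ l : ℕ, 0 < l ∧ l * a ≤ j ∧ j ≤ l * b := by
  have hb : 0 < b := ha.trans_lt hab
  have hba : 0 < b - a := sub_pos.2 hab
  filter_upwards [eventually_ge_atTop 1, eventually_ge_atTop ⌈a * b / (b - a)⌉₊] with j hj hj'
  have hj₀ : (0 : ℝ) < j := by exact_mod_cast hj
  have hlarge : a * b ≤ j * (b - a) := (div_le_iff₀ hba).1 (Nat.ceil_le.1 hj')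
  refine ⟨⌈j / b⌉₊, Nat.ceil_pos.2 (by positivity), ?_, (div_le_iff₀ hb).1 (Nat.le_ceil _)⟩
  calc (⌈j / b⌉₊ : ℝ) * a ≤ (j / b + 1) * a := by
        gcongr
        exact (Nat.ceil_lt_add_one (by positivity)).le
    _ = (j * a + a * b) / b := by field_simp
    _ ≤ j := by
        rw [div_le_iff₀ hb]
        linarith

/-- Let `w` be an additive `ℝ≥0∞`-valued valuation on a commutative ring `R`, `c > 0` a
real number, and `(v_j)` a sequence of additive `ℝ≥0∞`-valued valuations such that for
every `j ≥ 1` and every `g ∈ R` with `w(g) ≥ j` one has `v_j(g) ≥ j/c`. Then for every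
`f ∈ R`, `liminf_{j → ∞} v_j(f) ≥ w(f)/c`. -/
theorem liminf_ge_of_valuation_bound
    {R : Type*} [CommRing R] (w : AddValuation R ℝ≥0∞) (c : ℝ) (hc : 0 < c)
    (v : ℕ → AddValuation R ℝ≥0∞)
    (hv : ∀ j : ℕ, 1 ≤ j → ∀ g : R, (j : ℝ≥0∞) ≤ w g →
      (j : ℝ≥0∞) / ENNReal.ofReal c ≤ v j g) :
    ∀ f : R, w f / ENNReal.ofReal c ≤ Filter.liminf (fun j : ℕ => v j f) Filter.atTop := by
  intro f
  have hc₀ : ENNReal.ofReal c ≠ 0 := (ENNReal.ofReal_pos.2 hc).ne'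
  rw [ENNReal.div_le_iff hc₀ ENNReal.ofReal_ne_top]
  refine ENNReal.le_of_forall_nnreal_lt fun a ha => ?_
  rw [← ENNReal.div_le_iff hc₀ ENNReal.ofReal_ne_top]
  obtain ⟨b, hab, hb⟩ := ENNReal.lt_iff_exists_nnreal_btwn.1 ha
  refine le_liminf_of_le (by isBoundedDefault) ?_
  filter_upwards [eventually_ge_atTop 1, eventually_exists_nat_mul_le_le_mul a.2
    (NNReal.coe_lt_coe.2 (ENNReal.coe_lt_coe.1 hab))] with j hj ⟨l, hl, hla, hlb⟩
  have hla' : (l : ℝ≥0∞) * a ≤ j := by exact_mod_cast (show (l : ℝ≥0) * a ≤ j from hla)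
  have hlb' : (j : ℝ≥0∞) ≤ l * b := by exact_mod_cast (show (j : ℝ≥0) ≤ l * b from hlb)
  have hpow : (j : ℝ≥0∞) / ENNReal.ofReal c ≤ l * v j f := by
    rw [← nsmul_eq_mul, ← AddValuation.map_pow]
    refine hv j hj _ ?_
    rw [AddValuation.map_pow, nsmul_eq_mul]
    exact hlb'.trans (by gcongr)
  rw [← ENNReal.mul_le_mul_iff_right (Nat.cast_ne_zero.2 hl.ne') (ENNReal.natCast_ne_top l),
    ← mul_div_assoc]
  exact (ENNReal.div_le_div_right hla' _).trans hpow
end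

section
/- Let R be a commutative ring, 𝔞_• = (𝔞_k)_{k≥1} a graded sequence of nonzero ideals of R, and c > 0 a real number. Let (v_k)_{k≥1} be a sequence of additive valuations on R with values in ℝ≥0∞ such that v_k(𝔞_k) ≥ k/c for every k ≥ 1, and let v be an additive valuation on R with values in ℝ≥0∞ such that v(f) = lim_{k→∞} v_k(f) for every f ∈ R. Then v(𝔞_k) ≥ k/c for every k ≥ 1, and hence v(𝔞_•) := inf_{k≥1} v(𝔞_k)/k ≥ 1/c. -/
open Filter Topology ENNReal

/-- Powers of an element of a graded sequence of ideals lie in the corresponding multiple degree. -/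
theorem pow_mem_of_graded {R : Type*} [CommRing R] {a : ℕ → Ideal R}
    (hgraded : ∀ k l, 1 ≤ k → 1 ≤ l → a k * a l ≤ a (k + l))
    {k : ℕ} (hk : 1 ≤ k) {f : R} (hf : f ∈ a k) {m : ℕ} (hm : 1 ≤ m) :
    f ^ m ∈ a (m * k) := by
  induction m, hm using Nat.le_induction with
  | base => simpa using hf
  | succ m hm ih =>
    rw [pow_succ, Nat.succ_mul]
    exact hgraded _ _ (Nat.mul_pos hm hk) hk (Ideal.mul_mem_mul ih hf)

theorem idealVal_le {R : Type*} [CommRing R] (v : AddValuation R ℝ≥0∞) {I : Ideal R} {f : R}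
    (hf : f ∈ I) : idealVal v I ≤ v f :=
  iInf₂_le f hf

/-- Let `𝔞_•` be a graded sequence of nonzero ideals of a commutative ring `R`, `c > 0` a
real number, `(v_k)` a sequence of additive `ℝ≥0∞`-valued valuations with
`v_k(𝔞_k) ≥ k/c` for all `k ≥ 1`, and `v` an additive `ℝ≥0∞`-valued valuation which is
the pointwise limit of the `v_k`. Then `v(𝔞_k) ≥ k/c` for every `k ≥ 1`, and hence
`v(𝔞_•) := inf_{k≥1} v(𝔞_k)/k ≥ 1/c`. -/
theorem limit_valuation_graded_bound
    {R : Type*} [CommRing R] (a : ℕ → Ideal R)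
    (hnz : ∀ k, 1 ≤ k → a k ≠ ⊥)
    (hgraded : ∀ k l, 1 ≤ k → 1 ≤ l → a k * a l ≤ a (k + l))
    (c : ℝ) (hc : 0 < c)
    (vk : ℕ → AddValuation R ℝ≥0∞) (v : AddValuation R ℝ≥0∞)
    (hvk : ∀ k : ℕ, 1 ≤ k → (k : ℝ≥0∞) / ENNReal.ofReal c ≤ idealVal (vk k) (a k))
    (hlim : ∀ f : R, Tendsto (fun k : ℕ => vk k f) atTop (𝓝 (v f))) :
    (∀ k : ℕ, 1 ≤ k → (k : ℝ≥0∞) / ENNReal.ofReal c ≤ idealVal v (a k)) ∧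
    1 / ENNReal.ofReal c ≤ ⨅ (k : ℕ) (_ : 1 ≤ k), idealVal v (a k) / (k : ℝ≥0∞) := by
  have key : ∀ k : ℕ, 1 ≤ k → (k : ℝ≥0∞) / ENNReal.ofReal c ≤ idealVal v (a k) := by
    intro k hk
    refine le_iInf₂ fun f hf => ?_
    have hmul : Tendsto (fun m : ℕ => m * k) atTop atTop :=
      tendsto_id.atTop_mul_const' hk
    refine ge_of_tendsto ((hlim f).comp hmul) ?_
    filter_upwards [eventually_ge_atTop 1] with m hm
    have h := (hvk (m * k) (Nat.mul_pos hm hk)).trans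
      (idealVal_le (vk (m * k)) (pow_mem_of_graded hgraded hk hf hm))
    rw [AddValuation.map_pow, nsmul_eq_mul, Nat.cast_mul, mul_div_assoc] at h
    exact (ENNReal.mul_le_mul_iff_right (Nat.cast_ne_zero.mpr (by omega))
      (ENNReal.natCast_ne_top m)).mp h
  refine ⟨key, le_iInf₂ fun k hk => ?_⟩
  rw [ENNReal.le_div_iff_mul_le (Or.inl (Nat.cast_ne_zero.mpr (by omega)))
    (Or.inl (ENNReal.natCast_ne_top k)), one_div, mul_comm, ← div_eq_mul_inv]
  exact key k hk
end
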